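/- With g(n) := 1 + E[X_n] (and g(0) = g(1) = 1), the generating function G_p(x) = Σ_{n≥0} g(n)x^n satisfies G_p(x) = 1 + x / ((1-x)^2 B_p(x)), where B_p(x) = Σ_{n≥0} (1-p)^{C(n+1,2)} x^n. -/

import Mathlib

open Finset Filter

noncomputable section

/-- The weight of a path, given as a list of vertices. -/
def pathWeight (wt : ℕ → ℕ → ℕ) (l : List ℕ) : ℕ :=
  ((l.zip l.tail).map fun e => wt e.1 e.2).sum

/-- `l` is a directed path from `a` to `b` in the transitive tournament on `ℕ`. -/
def IsPath (a b : ℕ) (l : List ℕ) : Prop :=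
  l.Chain' (· < ·) ∧ l.head? = some a ∧ l.getLast? = some b

/-- `maxW wt a b` is the maximum weight of a directed path from `a` to `b`. -/
def maxW (wt : ℕ → ℕ → ℕ) (a b : ℕ) : ℕ :=
  sSup {m | ∃ l, IsPath a b l ∧ pathWeight wt l = m}

/-- The edges of the transitive tournament on `n` vertices. -/
abbrev Edge (n : ℕ) := {e : Fin n × Fin n // (e.1 : ℕ) < (e.2 : ℕ)}

/-- The sample space: an assignment of a `0/1` weight (a `Bool`) to each edge. -/
abbrev Omega (n : ℕ) := Edge n → Bool

/-- The weight function on vertices `1, …, n` induced by an outcome `w`. -/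
def wtOf {n : ℕ} (w : Omega n) (a b : ℕ) : ℕ :=
  if h : 1 ≤ a ∧ a < b ∧ b ≤ n then
    (if w ⟨(⟨a - 1, by omega⟩, ⟨b - 1, by omega⟩), by show a - 1 < b - 1; omega⟩
      then 1 else 0)
  else 0

/-- The probability of outcome `w`: each edge independently has weight 1
with probability `p` and weight 0 with probability `1 - p`. -/
def prob (p : ℝ) {n : ℕ} (w : Omega n) : ℝ :=
  ∏ e : Edge n, (if w e then p else 1 - p)

/-- `X n w` : the maximum weight of a directed path from vertex `1` to vertex `n`. -/
def X (n : ℕ) (w : Omega n) : ℕ := maxW (wtOf w) 1 n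

/-- The expectation of `X n` under i.i.d. Bernoulli(p) edge weights. -/
def EX (p : ℝ) (n : ℕ) : ℝ := ∑ w : Omega n, prob p w * (X n w : ℝ)


/-- `A_p(x) = Σ_{n≥0} (1-p)^{C(n,2)} x^n` as a formal power series over `ℝ`. -/
noncomputable def Aps (p : ℝ) : PowerSeries ℝ :=
  PowerSeries.mk fun n => (1 - p) ^ (n.choose 2)

/-- `B_p(x) = Σ_{n≥0} (1-p)^{C(n+1,2)} x^n` as a formal power series over `ℝ`. -/
noncomputable def Bps (p : ℝ) : PowerSeries ℝ :=
  PowerSeries.mk fun n => (1 - p) ^ ((n + 1).choose 2)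

/-!
Scan the vertices `1, 2, …` in order. The maximal weight of a path from `1` to `v` never decreases
with `v` and grows by at most one per vertex, so the scan splits the vertices into levels. If the
current level starts at `s`, then `v + 1` opens a new level iff some edge from `{s, …, v}` to
`v + 1` has weight one: lighter predecessors gain nothing. These edges are independent of the past
and there are `v + 1 - s` of them, so a level opened at `j` survives `k` further vertices with
probability `(1 - p) ^ (1 + 2 + ⋯ + k) = (1 - p) ^ C(k + 1, 2)`.

Let `r j` be the probability that a level starts at `j`. At vertex `n` exactly one level is current,
so `∑ r j * (1 - p) ^ C(n - j + 1, 2) = 1` over `1 ≤ j ≤ n`, i.e. `R * B = 1 / (1 - x)` for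
`R = ∑ r (j + 1) x ^ j`. Since `1 + E[X_n] = r 1 + ⋯ + r n`, summation gives the factor
`R / (1 - x) = 1 / ((1 - x) ^ 2 * B)`.
-/

section Paths

variable {wt : ℕ → ℕ → ℕ} {a b c : ℕ} {l : List ℕ}

lemma pathWeight_cons_cons (wt : ℕ → ℕ → ℕ) (a b : ℕ) (l : List ℕ) :
    pathWeight wt (a :: b :: l) = wt a b + pathWeight wt (b :: l) := by
  simp [pathWeight]

lemma pathWeight_concat_concat (wt : ℕ → ℕ → ℕ) (l : List ℕ) (b c : ℕ) :
    pathWeight wt (l ++ [b] ++ [c]) = pathWeight wt (l ++ [b]) + wt b c := by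
  induction l with
  | nil => simp [pathWeight]
  | cons x l ih =>
    cases l with
    | nil => simp [pathWeight]
    | cons y l =>
      simp only [List.cons_append, pathWeight_cons_cons] at ih ⊢
      rw [ih, add_assoc]

lemma isPath_singleton (a : ℕ) : IsPath a a [a] :=
  ⟨List.isChain_singleton a, rfl, rfl⟩

lemma IsPath.concat (hl : IsPath a b l) (hbc : b < c) : IsPath a c (l ++ [c]) := by
  obtain ⟨hchain, hhead, hlast⟩ := hl
  refine ⟨hchain.append (List.isChain_singleton c) ?_, ?_, List.getLast?_concat⟩
  · simpa [hlast] using hbc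
  · simp [hhead]

lemma IsPath.pathWeight_concat (hl : IsPath a b l) (c : ℕ) :
    pathWeight wt (l ++ [c]) = pathWeight wt l + wt b c := by
  obtain ⟨init, rfl⟩ := List.getLast?_eq_some_iff.1 hl.2.2
  exact pathWeight_concat_concat wt init b c

lemma IsPath.exists_pathWeight_le (wt : ℕ → ℕ → ℕ) (hl : IsPath a b l) (hbc : b ≤ c) :
    ∃ l', IsPath a c l' ∧ pathWeight wt l ≤ pathWeight wt l' := by
  rcases hbc.eq_or_lt with rfl | hbc
  · exact ⟨l, hl, le_rfl⟩
  · exact ⟨l ++ [c], hl.concat hbc, by simp [hl.pathWeight_concat c]⟩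

lemma IsPath.add_pathWeight_le {φ : ℕ → ℕ}
    (hφ : ∀ u v, a ≤ u → u < v → φ u + wt u v ≤ φ v) (hl : IsPath a b l) :
    φ a + pathWeight wt l ≤ φ b := by
  induction l generalizing a with
  | nil => simp [IsPath] at hl
  | cons x l ih =>
    obtain ⟨hchain, hhead, hlast⟩ := hl
    obtain rfl : x = a := Option.some_injective _ hhead
    cases l with
    | nil =>
      obtain rfl : x = b := Option.some_injective _ hlast
      simp [pathWeight]
    | cons y l =>
      obtain ⟨hxy, hchain⟩ := List.isChain_cons_cons.1 hchain
      have hy : φ y + pathWeight wt (y :: l) ≤ φ b :=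
        ih (fun u v hu => hφ u v (hxy.le.trans hu)) ⟨hchain, rfl, by simpa using hlast⟩
      have hx : φ x + wt x y ≤ φ y := hφ x y le_rfl hxy
      rw [pathWeight_cons_cons]
      omega

end Paths

section Levels

/-- Some edge into `v` from a vertex of `[s, v)` has nonzero weight: the condition under which `v`
opens a new level when the current one starts at `s`. -/
def HasHeavyInEdge (wt : ℕ → ℕ → ℕ) (s v : ℕ) : Prop :=
  ∃ u ∈ Ico s v, wt u v ≠ 0

instance (wt : ℕ → ℕ → ℕ) (s v : ℕ) : Decidable (HasHeavyInEdge wt s v) :=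
  inferInstanceAs (Decidable (∃ u ∈ Ico s v, wt u v ≠ 0))

/-- The first vertex of the level containing vertex `v`, found by scanning `1, …, v`. The value `1`
at the non-vertex `0` makes vertex `1` the start of the first level. -/
def levelStart (wt : ℕ → ℕ → ℕ) : ℕ → ℕ
  | 0 => 1
  | v + 1 => if HasHeavyInEdge wt (levelStart wt v) (v + 1) then v + 1 else levelStart wt v

/-- The index of the level containing vertex `v`, starting from `0` at vertex `1`: the number of
times the scan of `levelStart` opens a new level. For weights in `{0, 1}` it is the maximal weight
of a path from `1` to `v`, see `maxW_one_eq_level`. -/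
def level (wt : ℕ → ℕ → ℕ) : ℕ → ℕ
  | 0 => 0
  | v + 1 => level wt v + if HasHeavyInEdge wt (levelStart wt v) (v + 1) then 1 else 0

variable {wt wt' : ℕ → ℕ → ℕ} {u v n : ℕ}

lemma levelStart_succ_of_hasHeavyInEdge (h : HasHeavyInEdge wt (levelStart wt v) (v + 1)) :
    levelStart wt (v + 1) = v + 1 := by
  rw [levelStart, if_pos h]

lemma levelStart_succ_of_not_hasHeavyInEdge
    (h : ¬ HasHeavyInEdge wt (levelStart wt v) (v + 1)) :
    levelStart wt (v + 1) = levelStart wt v := by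
  rw [levelStart, if_neg h]

lemma level_succ_of_hasHeavyInEdge (h : HasHeavyInEdge wt (levelStart wt v) (v + 1)) :
    level wt (v + 1) = level wt v + 1 := by
  rw [level, if_pos h]

lemma level_succ_of_not_hasHeavyInEdge (h : ¬ HasHeavyInEdge wt (levelStart wt v) (v + 1)) :
    level wt (v + 1) = level wt v := by
  rw [level, if_neg h, add_zero]

lemma one_le_levelStart (wt : ℕ → ℕ → ℕ) (v : ℕ) : 1 ≤ levelStart wt v := by
  induction v with
  | zero => exact le_rfl
  | succ v ih =>
    rw [levelStart]
    split_ifs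
    · exact Nat.le_add_left 1 v
    · exact ih

lemma levelStart_le (wt : ℕ → ℕ → ℕ) (hv : 1 ≤ v) : levelStart wt v ≤ v := by
  suffices h : ∀ m, levelStart wt m ≤ max 1 m by simpa [hv] using h v
  intro m
  induction m with
  | zero => exact le_rfl
  | succ m ih =>
    rw [levelStart]
    split_ifs <;> omega

lemma not_hasHeavyInEdge_one (wt : ℕ → ℕ → ℕ) : ¬ HasHeavyInEdge wt 1 1 := by
  simp [HasHeavyInEdge]

lemma level_one (wt : ℕ → ℕ → ℕ) : level wt 1 = 0 :=
  level_succ_of_not_hasHeavyInEdge (not_hasHeavyInEdge_one wt)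

lemma level_mono (wt : ℕ → ℕ → ℕ) : Monotone (level wt) :=
  monotone_nat_of_le_succ fun _ => Nat.le_add_right _ _

lemma level_succ_eq_add_ite (wt : ℕ → ℕ → ℕ) (hv : 1 ≤ v) :
    level wt (v + 1) = level wt v + if levelStart wt (v + 1) = v + 1 then 1 else 0 := by
  by_cases h : HasHeavyInEdge wt (levelStart wt v) (v + 1)
  · rw [level_succ_of_hasHeavyInEdge h, if_pos (levelStart_succ_of_hasHeavyInEdge h)]
  · have hle := levelStart_le wt hv
    rw [level_succ_of_not_hasHeavyInEdge h, levelStart_succ_of_not_hasHeavyInEdge h,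
      if_neg (by omega), add_zero]

lemma level_lt_level_of_lt_levelStart (hu : 1 ≤ u) (huv : u < levelStart wt v) :
    level wt u < level wt v := by
  induction v with
  | zero => exact absurd huv hu.not_gt
  | succ v ih =>
    by_cases h : HasHeavyInEdge wt (levelStart wt v) (v + 1)
    · rw [levelStart_succ_of_hasHeavyInEdge h] at huv
      rw [level_succ_of_hasHeavyInEdge h]
      exact Nat.lt_succ_of_le (level_mono wt (Nat.le_of_lt_succ huv))
    · rw [levelStart_succ_of_not_hasHeavyInEdge h] at huv
      rw [level_succ_of_not_hasHeavyInEdge h]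
      exact ih huv

lemma level_add_weight_le (hwt : wt u v ≤ 1) (hu : 1 ≤ u) (huv : u < v) :
    level wt u + wt u v ≤ level wt v := by
  obtain ⟨v, rfl⟩ := Nat.exists_eq_add_one_of_ne_zero (Nat.ne_zero_of_lt huv)
  have hmono : level wt u ≤ level wt v := level_mono wt (Nat.le_of_lt_succ huv)
  have hmono_succ : level wt v ≤ level wt (v + 1) := level_mono wt v.le_succ
  by_cases hzero : wt u (v + 1) = 0
  · omega
  rcases le_or_gt (levelStart wt v) u with hstart | hstart
  · have hlevel : level wt (v + 1) = level wt v + 1 :=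
      level_succ_of_hasHeavyInEdge ⟨u, mem_Ico.2 ⟨hstart, huv⟩, hzero⟩
    omega
  · have hlevel := level_lt_level_of_lt_levelStart hu hstart
    omega

lemma exists_isPath_levelStart (wt : ℕ → ℕ → ℕ) (v : ℕ) :
    ∃ l, IsPath 1 (levelStart wt v) l ∧ level wt v ≤ pathWeight wt l := by
  induction v with
  | zero => exact ⟨[1], isPath_singleton 1, Nat.zero_le _⟩
  | succ v ih =>
    obtain ⟨l, hl, hweight⟩ := ih
    by_cases h : HasHeavyInEdge wt (levelStart wt v) (v + 1)
    · rw [levelStart_succ_of_hasHeavyInEdge h, level_succ_of_hasHeavyInEdge h]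
      obtain ⟨u, hu, hheavy⟩ := h
      rw [mem_Ico] at hu
      obtain ⟨l', hl', hweight'⟩ := hl.exists_pathWeight_le wt hu.1
      refine ⟨l' ++ [v + 1], hl'.concat hu.2, ?_⟩
      rw [hl'.pathWeight_concat]
      omega
    · rw [levelStart_succ_of_not_hasHeavyInEdge h, level_succ_of_not_hasHeavyInEdge h]
      exact ⟨l, hl, hweight⟩

theorem maxW_one_eq_level (hwt : ∀ u v, wt u v ≤ 1) (v : ℕ) : maxW wt 1 v = level wt v := by
  have hub : level wt v ∈ upperBounds {m | ∃ l, IsPath 1 v l ∧ pathWeight wt l = m} := by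
    rintro _ ⟨l, hl, rfl⟩
    exact (Nat.le_add_left _ _).trans
      (hl.add_pathWeight_le fun u v hu huv => level_add_weight_le (hwt u v) hu huv)
  refine le_antisymm (csSup_le' hub) ?_
  rcases Nat.eq_zero_or_pos v with rfl | hv
  · exact Nat.zero_le _
  obtain ⟨l, hl, hweight⟩ := exists_isPath_levelStart wt v
  obtain ⟨l', hl', hweight'⟩ := hl.exists_pathWeight_le wt (levelStart_le wt hv)
  exact (hweight.trans hweight').trans (le_csSup ⟨_, hub⟩ ⟨l', hl', rfl⟩)

lemma hasHeavyInEdge_congr {s : ℕ} (h : ∀ u ∈ Ico s v, wt u v = wt' u v) :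
    HasHeavyInEdge wt s v ↔ HasHeavyInEdge wt' s v :=
  exists_congr fun u => and_congr_right fun hu => by rw [h u hu]

lemma levelStart_congr (h : ∀ u v, 1 ≤ u → u < v → v ≤ n → wt u v = wt' u v) :
    levelStart wt n = levelStart wt' n := by
  induction n with
  | zero => rfl
  | succ n ih =>
    have hstart := ih fun u v hu huv hv => h u v hu huv (Nat.le_succ_of_le hv)
    simp only [levelStart, hstart]
    congr 1
    exact propext (hasHeavyInEdge_congr fun u hu => h u _
      ((one_le_levelStart wt' n).trans (mem_Ico.1 hu).1) (mem_Ico.1 hu).2 le_rfl)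

lemma level_congr (h : ∀ u v, 1 ≤ u → u < v → v ≤ n → wt u v = wt' u v) :
    level wt n = level wt' n := by
  induction n with
  | zero => rfl
  | succ n ih =>
    have h' : ∀ u v, 1 ≤ u → u < v → v ≤ n → wt u v = wt' u v :=
      fun u v hu huv hv => h u v hu huv (Nat.le_succ_of_le hv)
    have hedge : HasHeavyInEdge wt (levelStart wt' n) (n + 1) ↔
        HasHeavyInEdge wt' (levelStart wt' n) (n + 1) :=
      hasHeavyInEdge_congr fun u hu => h u _
        ((one_le_levelStart wt' n).trans (mem_Ico.1 hu).1) (mem_Ico.1 hu).2 le_rfl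
    simp only [level, ih h', levelStart_congr h', hedge]

end Levels

section BernoulliWeight

variable {R ι : Type*} [CommRing R] [Fintype ι]

/-- The probability of the outcome `b` of independent Bernoulli(`p`) trials indexed by `ι`. -/
def bernoulliWeight (p : R) (b : ι → Bool) : R :=
  ∏ i, if b i then p else 1 - p

variable [DecidableEq ι]

/-- The event that every trial in `S` fails, as a product set: this is the shape in which sums of
`bernoulliWeight` factor over the trials. -/
def failuresOn (S : Finset ι) : Finset (ι → Bool) :=
  Fintype.piFinset fun i => if i ∈ S then {false} else univ

lemma mem_failuresOn {S : Finset ι} {b : ι → Bool} :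
    b ∈ failuresOn S ↔ ∀ i ∈ S, b i = false := by
  rw [failuresOn, Fintype.mem_piFinset]
  refine forall_congr' fun i => ?_
  by_cases hi : i ∈ S <;> simp [hi]

lemma failuresOn_empty : failuresOn (∅ : Finset ι) = univ := by
  ext b
  simp [mem_failuresOn]

lemma sum_failuresOn_bernoulliWeight (p : R) (S : Finset ι) :
    ∑ b ∈ failuresOn S, bernoulliWeight p b = (1 - p) ^ #S := by
  have hfactor (i : ι) : ∑ c ∈ (if i ∈ S then {false} else univ : Finset Bool),
      (if c then p else 1 - p) = if i ∈ S then 1 - p else 1 := by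
    by_cases hi : i ∈ S <;> simp [hi]
  calc ∑ b ∈ failuresOn S, bernoulliWeight p b
      = ∏ i, ∑ c ∈ (if i ∈ S then {false} else univ : Finset Bool), (if c then p else 1 - p) := by
        rw [failuresOn, prod_univ_sum]; rfl
    _ = ∏ i, if i ∈ S then 1 - p else 1 := prod_congr rfl fun i _ => hfactor i
    _ = (1 - p) ^ #S := by simp

lemma sum_bernoulliWeight (p : R) : ∑ b : ι → Bool, bernoulliWeight p b = 1 := by
  simpa [failuresOn_empty] using sum_failuresOn_bernoulliWeight p (∅ : Finset ι)

end BernoulliWeight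

section AddVertex

variable {n : ℕ}

/-- The edges on `n + 1` vertices are the edges on the first `n` vertices together with one edge
from each of these to the last vertex. -/
def edgeSuccEquiv (n : ℕ) : Edge n ⊕ Fin n ≃ Edge (n + 1) where
  toFun := Sum.elim (fun e => ⟨(e.1.1.castSucc, e.1.2.castSucc), e.2⟩)
    (fun i => ⟨(i.castSucc, Fin.last n), i.2⟩)
  invFun e := if h : (e.1.2 : ℕ) < n then
      Sum.inl ⟨(⟨e.1.1, e.2.trans h⟩, ⟨e.1.2, h⟩), e.2⟩
    else Sum.inr ⟨e.1.1, e.2.trans_le (Nat.le_of_lt_succ e.1.2.2)⟩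
  left_inv := by rintro (⟨⟨a, b⟩, hab⟩ | i) <;> simp
  right_inv := by
    rintro ⟨⟨a, b⟩, hab⟩
    by_cases hb : (b : ℕ) < n
    · simp [hb]
    · have hlast : b = Fin.last n := Fin.ext (by have := b.2; simp; omega)
      subst hlast
      simp

/-- An outcome on `n + 1` vertices is an outcome on the first `n` vertices together with the weights
of the edges into the last vertex. -/
def omegaSuccEquiv (n : ℕ) : Omega n × (Fin n → Bool) ≃ Omega (n + 1) :=
  (Equiv.sumArrowEquivProdArrow _ _ _).symm.trans ((edgeSuccEquiv n).arrowCongr (Equiv.refl _))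

lemma omegaSuccEquiv_inl (x : Omega n × (Fin n → Bool)) (e : Edge n) :
    omegaSuccEquiv n x (edgeSuccEquiv n (Sum.inl e)) = x.1 e := by
  simp [omegaSuccEquiv, Equiv.sumArrowEquivProdArrow]

lemma omegaSuccEquiv_inr (x : Omega n × (Fin n → Bool)) (i : Fin n) :
    omegaSuccEquiv n x (edgeSuccEquiv n (Sum.inr i)) = x.2 i := by
  simp [omegaSuccEquiv, Equiv.sumArrowEquivProdArrow]

lemma sum_prob (p : ℝ) (n : ℕ) : ∑ w : Omega n, prob p w = 1 :=
  sum_bernoulliWeight p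

lemma prob_omegaSuccEquiv (p : ℝ) (x : Omega n × (Fin n → Bool)) :
    prob p (omegaSuccEquiv n x) = prob p x.1 * bernoulliWeight p x.2 := by
  rw [prob, ← (edgeSuccEquiv n).prod_comp, Fintype.prod_sum_type]
  simp only [omegaSuccEquiv_inl, omegaSuccEquiv_inr, prob, bernoulliWeight]

lemma wtOf_le_one (w : Omega n) (u v : ℕ) : wtOf w u v ≤ 1 := by
  unfold wtOf
  split_ifs <;> omega

lemma wtOf_omegaSuccEquiv_of_le (x : Omega n × (Fin n → Bool)) {u v : ℕ} (hu : 1 ≤ u)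
    (huv : u < v) (hv : v ≤ n) : wtOf (omegaSuccEquiv n x) u v = wtOf x.1 u v := by
  rw [wtOf, wtOf, dif_pos ⟨hu, huv, Nat.le_succ_of_le hv⟩, dif_pos ⟨hu, huv, hv⟩,
    ← omegaSuccEquiv_inl]
  rfl

lemma wtOf_omegaSuccEquiv_last (x : Omega n × (Fin n → Bool)) (i : Fin n) :
    wtOf (omegaSuccEquiv n x) (i + 1) (n + 1) = if x.2 i then 1 else 0 := by
  rw [wtOf, dif_pos ⟨Nat.le_add_left 1 i, Nat.succ_lt_succ i.2, le_rfl⟩, ← omegaSuccEquiv_inr]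
  rfl

lemma levelStart_wtOf_omegaSuccEquiv (x : Omega n × (Fin n → Bool)) :
    levelStart (wtOf (omegaSuccEquiv n x)) n = levelStart (wtOf x.1) n :=
  levelStart_congr fun _ _ => wtOf_omegaSuccEquiv_of_le x

lemma level_wtOf_omegaSuccEquiv (x : Omega n × (Fin n → Bool)) :
    level (wtOf (omegaSuccEquiv n x)) n = level (wtOf x.1) n :=
  level_congr fun _ _ => wtOf_omegaSuccEquiv_of_le x

lemma not_hasHeavyInEdge_omegaSuccEquiv_iff (x : Omega n × (Fin n → Bool)) {s : ℕ} (hs : 1 ≤ s) :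
    ¬ HasHeavyInEdge (wtOf (omegaSuccEquiv n x)) s (n + 1) ↔
      x.2 ∈ failuresOn ({i | s ≤ i + 1} : Finset (Fin n)) := by
  simp only [HasHeavyInEdge, mem_failuresOn, mem_Ico, mem_filter_univ, not_exists, not_and, not_not]
  constructor
  · intro h i hi
    simpa [wtOf_omegaSuccEquiv_last] using h (i + 1) ⟨hi, Nat.succ_lt_succ i.2⟩
  · rintro h u ⟨hsu, hun⟩
    obtain ⟨i, rfl⟩ : ∃ i : Fin n, u = i + 1 := ⟨⟨u - 1, by omega⟩, by simp; omega⟩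
    simp [wtOf_omegaSuccEquiv_last, h i hsu]

lemma levelStart_omegaSuccEquiv_succ_eq_iff (x : Omega n × (Fin n → Bool)) {s : ℕ} (hs : 1 ≤ s)
    (hsn : s ≤ n) :
    levelStart (wtOf (omegaSuccEquiv n x)) (n + 1) = s ↔
      levelStart (wtOf x.1) n = s ∧ x.2 ∈ failuresOn ({i | s ≤ i + 1} : Finset (Fin n)) := by
  rw [← not_hasHeavyInEdge_omegaSuccEquiv_iff x hs, levelStart, levelStart_wtOf_omegaSuccEquiv]
  split_ifs with h
  · refine iff_of_false (by omega) ?_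
    rintro ⟨rfl, hn⟩
    exact hn h
  · exact ⟨fun hstart => ⟨hstart, hstart ▸ h⟩, And.left⟩

end AddVertex

section LevelStartProb

variable (p : ℝ)

/-- The probability that the level containing vertex `n` starts at vertex `s`. In particular
`levelStartProb p j j` is the probability that a level starts at `j`. -/
def levelStartProb (n s : ℕ) : ℝ :=
  ∑ w : Omega n with levelStart (wtOf w) n = s, prob p w

lemma sum_levelStartProb {n : ℕ} (hn : 1 ≤ n) : ∑ s ∈ Ico 1 (n + 1), levelStartProb p n s = 1 := by
  have hmaps : ∀ w ∈ (univ : Finset (Omega n)), levelStart (wtOf w) n ∈ Ico 1 (n + 1) :=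
    fun w _ => mem_Ico.2 ⟨one_le_levelStart _ n, Nat.lt_succ_of_le (levelStart_le _ hn)⟩
  exact (sum_fiberwise_of_maps_to hmaps (prob p)).trans (sum_prob p n)

lemma card_filter_le_val_add_one {n s : ℕ} (hs : 1 ≤ s) (hsn : s ≤ n) :
    #({i | s ≤ i + 1} : Finset (Fin n)) = n + 1 - s := by
  have hIci : ({i | s ≤ i + 1} : Finset (Fin n)) = Ici ⟨s - 1, by omega⟩ := by
    ext i
    simp [Fin.le_def]
  rw [hIci, Fin.card_Ici]
  simp only
  omega

lemma levelStartProb_succ {n s : ℕ} (hs : 1 ≤ s) (hsn : s ≤ n) :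
    levelStartProb p (n + 1) s = levelStartProb p n s * (1 - p) ^ (n + 1 - s) := by
  rw [← card_filter_le_val_add_one hs hsn, ← sum_failuresOn_bernoulliWeight, levelStartProb,
    levelStartProb, sum_mul_sum, ← sum_product']
  symm
  refine sum_equiv (omegaSuccEquiv n) (fun x => ?_) fun x _ => (prob_omegaSuccEquiv p x).symm
  rw [mem_product, mem_filter_univ, mem_filter_univ,
    levelStart_omegaSuccEquiv_succ_eq_iff x hs hsn]

lemma levelStartProb_add {j : ℕ} (hj : 1 ≤ j) (k : ℕ) :
    levelStartProb p (j + k) j = levelStartProb p j j * (1 - p) ^ (k + 1).choose 2 := by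
  induction k with
  | zero => simp
  | succ k ih =>
    have hchoose : (k + 1 + 1).choose 2 = (k + 1).choose 2 + (j + k + 1 - j) := by
      rw [Nat.choose_succ_succ' (k + 1) 1, Nat.choose_one_right, add_assoc j,
        Nat.add_sub_cancel_left, add_comm]
    rw [← add_assoc, levelStartProb_succ p hj (Nat.le_add_right j k), ih, hchoose, pow_add,
      mul_assoc]

end LevelStartProb

section Expectation

variable (p : ℝ)

lemma EX_eq_sum_level (n : ℕ) : EX p n = ∑ w : Omega n, prob p w * (level (wtOf w) n : ℝ) := by
  simp only [EX, X, maxW_one_eq_level (wtOf_le_one _)]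

lemma EX_zero : EX p 0 = 0 := by
  simp [EX_eq_sum_level, level]

lemma EX_one : EX p 1 = 0 := by
  simp [EX_eq_sum_level, level_one]

lemma sum_prob_mul_level_omega_succ (n : ℕ) :
    ∑ w : Omega (n + 1), prob p w * (level (wtOf w) n : ℝ) = EX p n := by
  rw [← (omegaSuccEquiv n).sum_comp, Fintype.sum_prod_type, EX_eq_sum_level]
  refine sum_congr rfl fun w _ => ?_
  simp only [prob_omegaSuccEquiv, level_wtOf_omegaSuccEquiv, ← sum_mul, ← mul_sum,
    sum_bernoulliWeight, mul_one]

lemma EX_succ {n : ℕ} (hn : 1 ≤ n) :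
    EX p (n + 1) = EX p n + levelStartProb p (n + 1) (n + 1) := by
  rw [EX_eq_sum_level, ← sum_prob_mul_level_omega_succ, levelStartProb, sum_filter,
    ← sum_add_distrib]
  refine sum_congr rfl fun w _ => ?_
  rw [level_succ_eq_add_ite _ hn]
  push_cast
  rw [mul_add, mul_ite, mul_one, mul_zero]

lemma one_add_EX_succ (n : ℕ) :
    1 + EX p (n + 1) = ∑ j ∈ range (n + 1), levelStartProb p (j + 1) (j + 1) := by
  induction n with
  | zero =>
    have hfirst : levelStartProb p 1 1 = 1 := by simpa using sum_levelStartProb p le_rfl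
    simp [EX_one, hfirst]
  | succ n ih => rw [sum_range_succ, ← ih, EX_succ p (Nat.le_add_left 1 n), ← add_assoc 1]

end Expectation

section GeneratingFunctions

lemma mk_mul_mk_one {R : Type*} [Semiring R] (f : ℕ → R) :
    PowerSeries.mk f * PowerSeries.mk 1 = PowerSeries.mk fun n => ∑ j ∈ range (n + 1), f j := by
  ext n
  simp [PowerSeries.coeff_mul, Nat.sum_antidiagonal_eq_sum_range_succ_mk]

variable (p : ℝ)

lemma mk_levelStartProb_mul_Bps :
    PowerSeries.mk (fun j => levelStartProb p (j + 1) (j + 1)) * Bps p = PowerSeries.mk 1 := by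
  have hlevel (j k : ℕ) : levelStartProb p (j + 1) (j + 1) * (1 - p) ^ (k + 1).choose 2 =
      levelStartProb p (j + k + 1) (1 + j) := by
    rw [← levelStartProb_add p (Nat.le_add_left 1 j), add_right_comm, add_comm 1 j]
  ext n
  rw [PowerSeries.coeff_mul]
  simp only [Bps, PowerSeries.coeff_mk, Pi.one_apply, hlevel]
  calc ∑ x ∈ antidiagonal n, levelStartProb p (x.1 + x.2 + 1) (1 + x.1)
      = ∑ x ∈ antidiagonal n, levelStartProb p (n + 1) (1 + x.1) :=
        sum_congr rfl fun x hx => by rw [mem_antidiagonal.1 hx]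
    _ = ∑ s ∈ Ico 1 (n + 2), levelStartProb p (n + 1) s := by
        rw [Nat.sum_antidiagonal_eq_sum_range_succ_mk, sum_Ico_eq_sum_range]; rfl
    _ = 1 := sum_levelStartProb p (Nat.le_add_left 1 n)

lemma mk_one_add_EX_eq :
    PowerSeries.mk (fun n => 1 + EX p n) =
      1 + PowerSeries.X * PowerSeries.mk fun n => 1 + EX p (n + 1) := by
  have hshift := PowerSeries.eq_X_mul_shift_add_const (PowerSeries.mk fun n => 1 + EX p n)
  simpa [EX_zero, add_comm] using hshift

lemma constantCoeff_Bps : PowerSeries.constantCoeff (Bps p) = 1 := by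
  rw [← PowerSeries.coeff_zero_eq_constantCoeff_apply, Bps, PowerSeries.coeff_mk]
  simp

end GeneratingFunctions

theorem stmt5_general (p : ℝ) :
    PowerSeries.mk (fun n => 1 + EX p n) =
      1 + PowerSeries.X * ((1 - PowerSeries.X) ^ 2 * Bps p)⁻¹ := by
  set R := PowerSeries.mk fun j => levelStartProb p (j + 1) (j + 1) with hR
  have hpartial : PowerSeries.mk (fun n => 1 + EX p (n + 1)) = R * PowerSeries.mk 1 := by
    simp only [hR, mk_mul_mk_one, one_add_EX_succ]
  have hgeom : PowerSeries.mk 1 * (1 - PowerSeries.X) = (1 : PowerSeries ℝ) :=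
    PowerSeries.mk_one_mul_one_sub_eq_one ℝ
  have hinv : R * PowerSeries.mk 1 = ((1 - PowerSeries.X) ^ 2 * Bps p)⁻¹ := by
    rw [PowerSeries.eq_inv_iff_mul_eq_one (by simp [constantCoeff_Bps])]
    calc R * PowerSeries.mk 1 * ((1 - PowerSeries.X) ^ 2 * Bps p)
        = R * Bps p * (1 - PowerSeries.X) * (PowerSeries.mk 1 * (1 - PowerSeries.X)) := by ring
      _ = 1 := by rw [mk_levelStartProb_mul_Bps, hgeom, mul_one]
  rw [mk_one_add_EX_eq, hpartial, hinv]

/-- the generating function of `g(n) = 1 + E[X_n]` is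
`1 + x/((1-x)² B_p(x))`. -/
theorem stmt5 (p : ℝ) (hp : p ∈ Set.Ioo (0 : ℝ) 1) :
    PowerSeries.mk (fun n => 1 + EX p n) =
      1 + PowerSeries.X * ((1 - PowerSeries.X) ^ 2 * Bps p)⁻¹ := by
  exact stmt5_general p

end
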